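/- Let N ≥ 1 and for j ∈ {0, …, N} set λ_j = 2·(2j − N). Define vectors u_j, v_j ∈ ℚ^{N+1} by u_j[k] = Σ_{i=0}^{min(N−k, j)} (−1)^{k+i}·C(N−k, i)·C(N−i, j−i)·(N+1−k)_{i+1}/((3/2)_i) for k = 0, …, N, and v_j[k] = C(2N+2, k)·u_j[k] for k = 0, …, N. Then u_j is a left eigenvector and v_j a right eigenvector of G_N for the eigenvalue λ_j: G_N^T · u_j = λ_j · u_j and G_N · v_j = λ_j · v_j for every j ∈ {0, …, N}. -/

import Mathlib

open Matrix

/-- The matrix `G_N`, over `ℚ`. -/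
def Gmat (N : ℕ) : Matrix (Fin (N+1)) (Fin (N+1)) ℚ :=
  Matrix.of fun k l =>
    if (l : ℕ) = (k : ℕ) + 1 then ((k : ℕ) + 1 : ℚ)
    else if (l : ℕ) + 1 = (k : ℕ) then ((2 * N + 3 - (k : ℕ) : ℕ) : ℚ)
    else 0

/-- The odd polynomial `x (x² - 1²) ⋯ (x² - i²)`. -/
def oddFactorial (x : ℚ) : ℕ → ℚ
  | 0 => x
  | i + 1 => oddFactorial x i * (x ^ 2 - ((i : ℚ) + 1) ^ 2)

theorem oddFactorial_add_one (x : ℚ) (i : ℕ) :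
    oddFactorial (x + 1) (i + 1) = oddFactorial x i * (x + i + 1) * (x + i + 2) := by
  induction i with
  | zero => simp only [oddFactorial]; push_cast; ring
  | succ i ih => rw [oddFactorial, ih, oddFactorial]; push_cast; ring

theorem oddFactorial_sub_one (x : ℚ) (i : ℕ) :
    oddFactorial (x - 1) (i + 1) = oddFactorial x i * (x - i - 1) * (x - i - 2) := by
  induction i with
  | zero => simp only [oddFactorial]; push_cast; ring
  | succ i ih => rw [oddFactorial, ih, oddFactorial]; push_cast; ring

theorem oddFactorial_zero_left (i : ℕ) : oddFactorial 0 i = 0 := by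
  induction i with
  | zero => rfl
  | succ i ih => rw [oddFactorial, ih, zero_mul]

theorem descFactorial_mul_ascPochhammer_eval (n i : ℕ) :
    (n.descFactorial i : ℚ) * (ascPochhammer ℚ (i + 1)).eval ((n : ℚ) + 1) =
      oddFactorial ((n : ℚ) + 1) i := by
  induction i with
  | zero => simp [oddFactorial]
  | succ i ih =>
    rw [oddFactorial, ← ih, ascPochhammer_succ_eval, Nat.descFactorial_succ]
    rcases le_or_gt i n with h | h
    · push_cast [Nat.cast_sub h]; ring
    · simp [Nat.descFactorial_of_lt h]

/-- The coefficient of `oddFactorial x i` in the expansion of the `j`-th eigenvector. -/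
noncomputable def eigenCoeff (N j i : ℕ) : ℚ :=
  (-1) ^ i * ((N - i).choose (j - i) : ℚ) / (i.factorial * (ascPochhammer ℚ i).eval (3 / 2))

theorem eigenCoeff_succ {N j i : ℕ} (hj : j ≤ N) (hi : i < j) :
    eigenCoeff N j (i + 1) * ((i + 1) * (2 * i + 3) * (N - i)) =
      -2 * (j - i) * eigenCoeff N j i := by
  obtain ⟨a, rfl⟩ := Nat.exists_eq_add_of_lt hi
  obtain ⟨b, rfl⟩ := Nat.exists_eq_add_of_le hj
  have hchoose : ((a + b + 1 : ℕ) : ℚ) * ((a + b).choose a : ℚ) =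
      ((a + b + 1).choose (a + 1) : ℚ) * ((a + 1 : ℕ) : ℚ) := by
    exact_mod_cast Nat.add_one_mul_choose_eq (a + b) a
  have hpos : 0 < (ascPochhammer ℚ i).eval (3 / 2 : ℚ) := ascPochhammer_pos i _ (by norm_num)
  have hfac : (i.factorial : ℚ) ≠ 0 := by exact_mod_cast i.factorial_ne_zero
  have hlin : (3 / 2 + i : ℚ) ≠ 0 := by positivity
  unfold eigenCoeff
  rw [ascPochhammer_succ_eval, Nat.factorial_succ,
    show i + a + 1 + b - (i + 1) = a + b by lia, show i + a + 1 - (i + 1) = a by lia,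
    show i + a + 1 + b - i = a + b + 1 by lia, show i + a + 1 - i = a + 1 by lia]
  push_cast at hchoose ⊢
  field_simp
  linear_combination (-(2 * (i : ℚ) + 3) * (-1) ^ i) * hchoose

/-- The `j`-th eigenvector, up to the sign `(-1) ^ k`, at `x = N + 1 - k`. -/
noncomputable def eigenPoly (N j : ℕ) (x : ℚ) : ℚ :=
  ∑ i ∈ Finset.range (j + 1), eigenCoeff N j i * oddFactorial x i

theorem oddFactorial_zero_recurrence (N : ℕ) (x : ℚ) :
    (N + 1 - x) * oddFactorial (x + 1) 0 + (N + 1 + x) * oddFactorial (x - 1) 0 =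
      2 * N * oddFactorial x 0 := by
  simp only [oddFactorial]; ring

theorem oddFactorial_succ_recurrence (N i : ℕ) (x : ℚ) :
    (N + 1 - x) * oddFactorial (x + 1) (i + 1) + (N + 1 + x) * oddFactorial (x - 1) (i + 1) =
      (2 * N - 4 * (i + 1)) * oddFactorial x (i + 1) +
        2 * ((i + 1) * (2 * i + 3) * (N - i)) * oddFactorial x i := by
  rw [oddFactorial_add_one, oddFactorial_sub_one, oddFactorial]; ring

theorem eigenPoly_recurrence {N j : ℕ} (hj : j ≤ N) (x : ℚ) :
    (N + 1 - x) * eigenPoly N j (x + 1) + (N + 1 + x) * eigenPoly N j (x - 1) =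
      (2 * N - 4 * j) * eigenPoly N j x := by
  have sum_telescope : ∀ n ≤ j,
      ∑ i ∈ Finset.range (n + 1), eigenCoeff N j i *
        ((N + 1 - x) * oddFactorial (x + 1) i + (N + 1 + x) * oddFactorial (x - 1) i
          - (2 * N - 4 * j) * oddFactorial x i) =
      4 * (j - n) * eigenCoeff N j n * oddFactorial x n := by
    intro n hn
    induction n with
    | zero =>
      rw [Finset.sum_range_one, oddFactorial_zero_recurrence]; push_cast; ring
    | succ n ih =>
      rw [Finset.sum_range_succ, ih (by lia), oddFactorial_succ_recurrence]
      have h := eigenCoeff_succ hj (show n < j by lia)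
      push_cast
      linear_combination 2 * oddFactorial x n * h
  have h := sum_telescope j le_rfl
  rw [sub_self, mul_zero, zero_mul, zero_mul] at h
  rw [← sub_eq_zero, ← h, eigenPoly, eigenPoly, eigenPoly, Finset.mul_sum, Finset.mul_sum,
    Finset.mul_sum, ← Finset.sum_add_distrib, ← Finset.sum_sub_distrib]
  exact Finset.sum_congr rfl fun i _ => by ring

theorem eigenvector_entry_eq {N j k : ℕ} (hk : k ≤ N) :
    ∑ i ∈ Finset.range (min (N - k) j + 1),
        (-1 : ℚ) ^ (k + i) * ((N - k).choose i : ℚ) * ((N - i).choose (j - i) : ℚ) *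
          ((ascPochhammer ℚ (i + 1)).eval (((N + 1 - k : ℕ) : ℚ)) /
            (ascPochhammer ℚ i).eval (3 / 2 : ℚ)) =
      (-1) ^ k * eigenPoly N j (N + 1 - k) := by
  obtain ⟨n, rfl⟩ := Nat.exists_eq_add_of_le hk
  rw [show k + n - k = n by lia, show k + n + 1 - k = n + 1 by lia,
    show ((k + n : ℕ) : ℚ) + 1 - k = n + 1 by push_cast; ring, eigenPoly, Finset.mul_sum]
  rw [Finset.sum_subset (Finset.range_mono (by lia : min n j + 1 ≤ j + 1))]
  · refine Finset.sum_congr rfl fun i _ => ?_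
    have hfac : (i.factorial : ℚ) ≠ 0 := by exact_mod_cast i.factorial_ne_zero
    have hpos : 0 < (ascPochhammer ℚ i).eval (3 / 2 : ℚ) := ascPochhammer_pos i _ (by norm_num)
    rw [← descFactorial_mul_ascPochhammer_eval, Nat.descFactorial_eq_factorial_mul_choose,
      eigenCoeff]
    push_cast
    field_simp
    ring
  · intro i hi hi'
    rw [Finset.mem_range] at hi hi'
    rw [Nat.choose_eq_zero_of_lt (by lia : n < i)]
    simp

theorem Gmat_transpose_mulVec (N : ℕ) (f : ℕ → ℚ) (hf : f (N + 1) = 0) (k : Fin (N + 1)) :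
    (Gmat N)ᵀ.mulVec (fun l => f l) k =
      (k : ℕ) * f (k - 1) + (2 * N + 2 - (k : ℕ)) * f (k + 1) := by
  obtain ⟨k, hk⟩ := k
  have hterm : ∀ l : Fin (N + 1), (Gmat N)ᵀ ⟨k, hk⟩ l * f l =
      (if (l : ℕ) + 1 = k then (k : ℚ) * f (k - 1) else 0) +
        (if (l : ℕ) = k + 1 then (2 * N + 2 - (k : ℚ)) * f (k + 1) else 0) := by
    rintro ⟨l, hl⟩
    simp only [Gmat, Matrix.transpose_apply, Matrix.of_apply]
    by_cases h : l + 1 = k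
    · subst h
      simp [show l ≠ l + 1 + 1 by lia]
    · by_cases h' : l = k + 1
      · subst h'
        rw [if_neg (by lia), if_pos rfl, if_neg (by lia), if_pos rfl,
          Nat.cast_sub (by lia)]
        push_cast
        ring
      · rw [if_neg (by lia), if_neg (by lia), if_neg h, if_neg h']
        simp
  rw [Matrix.mulVec, dotProduct, Finset.sum_congr rfl fun l _ => hterm l,
    Fin.sum_univ_eq_sum_range (fun m : ℕ => (if m + 1 = k then (k : ℚ) * f (k - 1) else 0) +
      (if m = k + 1 then (2 * N + 2 - (k : ℚ)) * f (k + 1) else 0)), Finset.sum_add_distrib, Finset.sum_ite_eq']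
  congr 1
  · cases k with
    | zero => simp
    | succ k =>
      simp only [Nat.add_right_cancel_iff]
      rw [Finset.sum_ite_eq', if_pos (Finset.mem_range.2 (by lia))]
  · by_cases h : k + 1 < N + 1
    · rw [if_pos (Finset.mem_range.2 h)]
    · rw [if_neg (by simpa using h), show k + 1 = N + 1 by lia, hf, mul_zero]

theorem Gmat_mul_choose (N : ℕ) (k l : Fin (N + 1)) :
    Gmat N k l * ((2 * N + 2).choose (l : ℕ) : ℚ) =
      ((2 * N + 2).choose (k : ℕ) : ℚ) * Gmat N l k := by
  have hchoose : ∀ m : ℕ, ((2 * N + 2).choose (m + 1) : ℚ) * (m + 1) =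
      ((2 * N + 2).choose m : ℚ) * ((2 * N + 3 - (m + 1) : ℕ) : ℚ) := by
    intro m
    rw [show 2 * N + 3 - (m + 1) = 2 * N + 2 - m by lia]
    exact_mod_cast Nat.choose_succ_right_eq (2 * N + 2) m
  obtain ⟨k, hk⟩ := k
  obtain ⟨l, hl⟩ := l
  simp only [Gmat, Matrix.of_apply]
  by_cases h : l = k + 1
  · subst h
    rw [if_pos rfl, if_neg (by lia), if_pos rfl, ← hchoose k, mul_comm]
  · by_cases h' : k = l + 1
    · subst h'
      rw [if_neg (by lia), if_pos rfl, if_pos rfl, hchoose l, mul_comm]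
    · rw [if_neg h, if_neg (by lia), if_neg h', if_neg (by lia), zero_mul, mul_zero]

theorem Gmat_mulVec_choose_mul (N : ℕ) (w : Fin (N + 1) → ℚ) (k : Fin (N + 1)) :
    (Gmat N).mulVec (fun l => ((2 * N + 2).choose (l : ℕ) : ℚ) * w l) k =
      ((2 * N + 2).choose (k : ℕ) : ℚ) * (Gmat N)ᵀ.mulVec w k := by
  simp only [Matrix.mulVec, dotProduct, Finset.mul_sum, Matrix.transpose_apply]
  exact Finset.sum_congr rfl fun l _ => by rw [← mul_assoc, Gmat_mul_choose, mul_assoc]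

theorem Gmat_transpose_mulVec_eigenPoly {N j : ℕ} (hj : j ≤ N) (k : Fin (N + 1)) :
    (Gmat N)ᵀ.mulVec (fun l => (-1) ^ (l : ℕ) * eigenPoly N j (N + 1 - (l : ℕ))) k =
      2 * (2 * j - N) * ((-1) ^ (k : ℕ) * eigenPoly N j (N + 1 - (k : ℕ))) := by
  rw [Gmat_transpose_mulVec N (fun l => (-1) ^ l * eigenPoly N j (N + 1 - l))
    (by simp [eigenPoly, oddFactorial_zero_left])]
  obtain ⟨k, hk⟩ := k
  have h := eigenPoly_recurrence hj ((N : ℚ) + 1 - k)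
  rw [show (N : ℚ) + 1 - k - 1 = N + 1 - ((k + 1 : ℕ) : ℚ) by push_cast; ring] at h
  cases k with
  | zero =>
    simp only [Nat.cast_zero, zero_mul, pow_succ, zero_add] at h ⊢
    linear_combination -h
  | succ k =>
    rw [show (N : ℚ) + 1 - ((k + 1 : ℕ) : ℚ) + 1 = N + 1 - (k : ℚ) by push_cast; ring] at h
    simp only [Nat.add_sub_cancel, pow_succ]
    push_cast at h ⊢
    linear_combination (-1) ^ k * h

theorem stmt_19 (N : ℕ) (hN : 1 ≤ N)
    (u v : Fin (N+1) → Fin (N+1) → ℚ)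
    (hu : ∀ j k, u j k =
      ∑ i ∈ Finset.range (min (N - (k : ℕ)) (j : ℕ) + 1),
        (-1 : ℚ) ^ ((k : ℕ) + i) * ((N - (k : ℕ)).choose i : ℚ) *
          ((N - i).choose ((j : ℕ) - i) : ℚ) *
          ((ascPochhammer ℚ (i + 1)).eval (((N + 1 - (k : ℕ) : ℕ) : ℚ)) /
            (ascPochhammer ℚ i).eval (3/2 : ℚ)))
    (hv : ∀ j k, v j k = ((2 * N + 2).choose (k : ℕ) : ℚ) * u j k) :
    ∀ j : Fin (N+1),
      (Gmat N)ᵀ.mulVec (u j) = (2 * (2 * (j : ℕ) - (N : ℚ))) • u j ∧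
      (Gmat N).mulVec (v j) = (2 * (2 * (j : ℕ) - (N : ℚ))) • v j := by
  intro j
  have hu' : u j = fun k : Fin (N + 1) => (-1) ^ (k : ℕ) * eigenPoly N j (N + 1 - (k : ℕ)) :=
    funext fun k => (hu j k).trans (eigenvector_entry_eq (Nat.lt_succ_iff.1 k.2))
  have hleft : (Gmat N)ᵀ.mulVec (u j) = (2 * (2 * (j : ℕ) - (N : ℚ))) • u j := by
    funext k
    rw [hu', Gmat_transpose_mulVec_eigenPoly (Nat.lt_succ_iff.1 j.2), Pi.smul_apply, smul_eq_mul]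
  refine ⟨hleft, ?_⟩
  funext k
  rw [funext (hv j), Gmat_mulVec_choose_mul, hleft]
  simp only [Pi.smul_apply, smul_eq_mul]
  ring
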